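/- arXiv:2103.15271 — 2 statements merged into one kernel-verified Lean document; each statement's English description precedes it below -/
import Mathlib

section
/- (Theorem 1, part ii) Under the standing assumptions on the global optimization problem, b defined by b_i = ((∑_{j∈J} (k_j : EReal) * A i j) + c) / (∑_{j∈J} k_j) is the greatest lower bound: if y : Fin m → EReal satisfies F_i(x) ≥ y_i for every x ∈ 𝒳 and every i, then y_i ≤ b_i for every i. -/
open scoped BigOperators

noncomputable section

/-- Max-plus product: `(A ⊗ x)_i = ⨆_j (A i j + x_j)` in `EReal`. -/
def maxPlus {m n : ℕ} (A : Matrix (Fin m) (Fin n) EReal) (x : Fin n → EReal)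
    (i : Fin m) : EReal :=
  ⨆ j, A i j + x j

/-- Auxiliary subtraction: `s(b,a) = +∞` if `a = -∞`, else `b - a`. -/
def sSub (b a : EReal) : EReal := if a = ⊥ then ⊤ else b - a

/-- Greatest subsolution `x*(A,b)_j = ⨅_i s(b_i, A i j)`. -/
def xstar {m n : ℕ} (A : Matrix (Fin m) (Fin n) EReal) (b : Fin m → EReal)
    (j : Fin n) : EReal :=
  ⨅ i, sSub (b i) (A i j)

/-- Objective function `F(x)_i = ⨆_j (A i j + x_j)` for real vectors `x`. -/
def objF {m n : ℕ} (A : Matrix (Fin m) (Fin n) EReal) (x : Fin n → ℝ)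
    (i : Fin m) : EReal :=
  ⨆ j, A i j + (x j : EReal)

/-- `J = {j | k_j > 0}` as a finite set. -/
def Jset {n : ℕ} (k : Fin n → ℝ) : Finset (Fin n) :=
  Finset.univ.filter (fun j => 0 < k j)

/-- Greatest lower bound `b_i = ((∑_{j ∈ J} k_j * A i j) + c) / (∑_{j ∈ J} k_j)`. -/
def glb {m n : ℕ} (A : Matrix (Fin m) (Fin n) EReal) (k : Fin n → ℝ) (c : ℝ)
    (i : Fin m) : EReal :=
  ((∑ j ∈ Jset k, (k j : EReal) * A i j) + (c : EReal)) /
    ((∑ j ∈ Jset k, k j : ℝ) : EReal)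

/-- `xt` is a globally optimal solution of the problem `(A, k, c)`. -/
def IsOptimal {m n : ℕ} (A : Matrix (Fin m) (Fin n) EReal) (k : Fin n → ℝ)
    (c : ℝ) (xt : Fin n → ℝ) : Prop :=
  (∑ j, k j * xt j = c) ∧
    ∀ x : Fin n → ℝ, (∑ j, k j * x j = c) → ∀ i, objF A xt i ≤ objF A x i

/-!
If the real numbers `a j` majorize row `i` of `A`, then `x j = t - a j` makes every term of
`objF A x i` at most `t`, and `x` is feasible exactly when `t` is the value of `glb` computed with
`a` in place of the row. Since a sum in `EReal` collapses to `⊥` as soon as one positively weighted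
entry is `⊥`, real majorants of the row approximate the weighted sum in `glb` from above: a single
`⊥` entry can be majorized by an arbitrarily negative number. Hence every real `t ≥ glb A k c i`
bounds `objF A x i` for some feasible `x`.
-/

section WeightedSums

variable {ι : Type*}

theorem ereal_coe_sum (s : Finset ι) (f : ι → ℝ) :
    ((∑ j ∈ s, f j : ℝ) : EReal) = ∑ j ∈ s, (f j : EReal) :=
  map_sum (⟨⟨Real.toEReal, EReal.coe_zero⟩, EReal.coe_add⟩ : ℝ →+ EReal) f s

variable [Fintype ι]

theorem exists_sum_mul_eq_of_ne_zero {K : Type*} [Field K] {k : ι → K} {j₀ : ι}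
    (hj₀ : k j₀ ≠ 0) (f : ι → K) (r : K) :
    ∃ g : ι → K, (∀ j ≠ j₀, g j = f j) ∧ ∑ j, k j * g j = r := by
  classical
  refine ⟨Function.update f j₀ ((r - ∑ j ∈ Finset.univ.erase j₀, k j * f j) / k j₀),
    fun j hj => Function.update_of_ne hj _ _, ?_⟩
  have off_j₀ : ∀ v, ∑ j ∈ Finset.univ.erase j₀, k j * Function.update f j₀ v j =
      ∑ j ∈ Finset.univ.erase j₀, k j * f j := fun v =>
    Finset.sum_congr rfl fun j hj => by rw [Function.update_of_ne (Finset.ne_of_mem_erase hj)]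
  rw [← Finset.add_sum_erase _ _ (Finset.mem_univ j₀), off_j₀, Function.update_self,
    mul_div_cancel₀ _ hj₀, sub_add_cancel]

theorem sum_mul_div_sum_sub {K : Type*} [Field K] {k : ι → K} (hk : ∑ j, k j ≠ 0)
    (a : ι → K) (c : K) :
    ∑ j, k j * ((∑ l, k l * a l + c) / (∑ l, k l) - a j) = c := by
  simp only [mul_sub, Finset.sum_sub_distrib, ← Finset.sum_mul]
  rw [mul_div_cancel₀ _ hk, add_sub_cancel_left]

theorem exists_real_majorant_sum_mul_le {k : ι → ℝ} (hk : ∀ j, 0 ≤ k j) {a : ι → EReal}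
    (ha : ∀ j, a j ≠ ⊤) {r : ℝ} (h : ∑ j, (k j : EReal) * a j ≤ r) :
    ∃ b : ι → ℝ, (∀ j, a j ≤ b j) ∧ ∑ j, k j * b j ≤ r := by
  by_cases hbot : ∃ j, 0 < k j ∧ a j = ⊥
  · obtain ⟨j₀, hj₀, ha₀⟩ := hbot
    obtain ⟨b, hb, hsum⟩ := exists_sum_mul_eq_of_ne_zero hj₀.ne' (fun j => (a j).toReal) r
    refine ⟨b, fun j => ?_, hsum.le⟩
    obtain rfl | hj := eq_or_ne j j₀
    · exact ha₀ ▸ bot_le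
    · exact hb j hj ▸ EReal.le_coe_toReal (ha j)
  · refine ⟨fun j => (a j).toReal, fun j => EReal.le_coe_toReal (ha j), ?_⟩
    have coe_term : ∀ j, ((k j * (a j).toReal : ℝ) : EReal) = k j * a j := fun j => by
      obtain hj | hj := (hk j).eq_or_lt
      · simp [← hj]
      · rw [EReal.coe_mul, EReal.coe_toReal (ha j) fun hb => hbot ⟨j, hj, hb⟩]
    rwa [← EReal.coe_le_coe_iff, ereal_coe_sum, Finset.sum_congr rfl fun j _ => coe_term j]

end WeightedSums

section Problem

variable {m n : ℕ} {A : Matrix (Fin m) (Fin n) EReal} {k : Fin n → ℝ} {c : ℝ} {i : Fin m}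

theorem objF_le_coe_iff {x : Fin n → ℝ} {t : ℝ} :
    objF A x i ≤ t ↔ ∀ j, A i j ≤ ((t - x j : ℝ) : EReal) := by
  simp only [objF, iSup_le_iff, EReal.coe_sub,
    EReal.le_sub_iff_add_le (.inl (EReal.coe_ne_bot _)) (.inl (EReal.coe_ne_top _))]

theorem sum_Jset_eq_sum {M : Type*} [AddCommMonoid M] (hk : ∀ j, 0 ≤ k j) {f : Fin n → M}
    (hf : ∀ j, k j = 0 → f j = 0) : ∑ j ∈ Jset k, f j = ∑ j, f j :=
  Finset.sum_filter_of_ne fun j _ hj => (hk j).lt_of_ne' (mt (hf j) hj)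

theorem glb_le_coe_iff (hk : ∀ j, 0 ≤ k j) (hpos : 0 < ∑ j, k j) {t : ℝ} :
    glb A k c i ≤ t ↔
      ∑ j, (k j : EReal) * A i j ≤ (((∑ j, k j) * t - c : ℝ) : EReal) := by
  rw [glb, sum_Jset_eq_sum hk fun _ hj => hj, sum_Jset_eq_sum hk fun j hj => by simp [hj],
    EReal.div_le_iff_le_mul (EReal.coe_pos.2 hpos) (EReal.coe_ne_top _), EReal.coe_sub,
    EReal.coe_mul,
    EReal.le_sub_iff_add_le (.inl (EReal.coe_ne_bot _)) (.inl (EReal.coe_ne_top _))]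

theorem exists_objF_le_of_glb_le (hA : ∀ j, A i j ≠ ⊤) (hk : ∀ j, 0 ≤ k j)
    (hk0 : ∃ j, k j ≠ 0) {t : ℝ} (ht : glb A k c i ≤ t) :
    ∃ x : Fin n → ℝ, ∑ j, k j * x j = c ∧ objF A x i ≤ t := by
  have hpos : 0 < ∑ j, k j :=
    Fintype.sum_pos (lt_of_le_of_ne hk fun h => hk0.elim fun j hj => hj (congrFun h j).symm)
  obtain ⟨a, hAa, hsum⟩ :=
    exists_real_majorant_sum_mul_le hk hA ((glb_le_coe_iff hk hpos).1 ht)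
  have hmean : (∑ j, k j * a j + c) / ∑ j, k j ≤ t := by
    rw [div_le_iff₀' hpos]
    linarith
  refine ⟨fun j => (∑ l, k l * a l + c) / (∑ l, k l) - a j,
    sum_mul_div_sum_sub hpos.ne' a c, objF_le_coe_iff.2 fun j => (hAa j).trans ?_⟩
  exact EReal.coe_le_coe_iff.2 (by linarith)

theorem stmt_4_general (hA : ∀ j, A i j ≠ ⊤) (hk : ∀ j, 0 ≤ k j) (hk0 : ∃ j, k j ≠ 0)
    {v : EReal} (hv : ∀ x : Fin n → ℝ, ∑ j, k j * x j = c → v ≤ objF A x i) :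
    v ≤ glb A k c i := by
  refine EReal.le_of_forall_lt_iff_le.1 fun t ht => ?_
  obtain ⟨x, hx, hxt⟩ := exists_objF_le_of_glb_le hA hk hk0 ht.le
  exact (hv x hx).trans hxt

end Problem

theorem stmt_4 {m n : ℕ} (hm : 1 ≤ m) (hn : 1 ≤ n)
    (A : Matrix (Fin m) (Fin n) EReal) (hA : ∀ i j, A i j ≠ ⊤)
    (k : Fin n → ℝ) (hk : ∀ j, 0 ≤ k j) (hk0 : ∃ j, k j ≠ 0) (c : ℝ)
    (hrow : ∀ i, ∃ j, A i j ≠ ⊥)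
    (hcol : ∀ j, (∀ i, A i j = ⊥) → 0 < k j) :
    ∀ y : Fin m → EReal,
      (∀ x : Fin n → ℝ, (∑ j, k j * x j = c) → ∀ i, y i ≤ objF A x i) →
        ∀ i, y i ≤ glb A k c i :=
  fun _ hy i => stmt_4_general (hA i) hk hk0 fun x hx => hy x hx i
end
end

section
/- (Theorem 4, inclusion S ⊆ optimal) Under the standing assumptions on the global optimization problem, assume the problem is solvable. Then every x̃ : Fin n → ℝ satisfying (x̃_j : EReal) ≤ x*_j(A,b) for all j with k_j = 0 and (x̃_j : EReal) = x*_j(A,b) for all j with k_j > 0 is a globally optimal solution: x̃ ∈ 𝒳 and F_i(x) ≥ F_i(x̃) for every x ∈ 𝒳 and every i. -/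
open scoped BigOperators

noncomputable section

/-!
For feasible `x`, averaging the terms `A i j + x j` with weights `k j` shows `b i ≤ F(x) i`, where
`b = glb A k c`; for a single row `i` with `b i` finite, equality is attained by making all the
terms equal. Hence, once an optimal solution `y` exists, `F(y) ≤ b`, which by residuation means
`y ≤ x*`. Now let `x̃ ≤ x*` with equality on `J`. By residuation `F(x̃) ≤ b`, so only feasibility
is at stake. Averaging in any row gives `∑ k j * x̃ j ≤ c`, and `y ≤ x* = x̃` on `J` gives
`c = ∑ k j * y j ≤ ∑ k j * x̃ j`.
-/

theorem mem_Jset {n : ℕ} {k : Fin n → ℝ} {j : Fin n} : j ∈ Jset k ↔ 0 < k j := by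
  simp [Jset]

theorem sum_Jset_pos {n : ℕ} {k : Fin n → ℝ} (hk : ∃ j, 0 < k j) : 0 < ∑ j ∈ Jset k, k j :=
  Finset.sum_pos (fun _ hj => mem_Jset.1 hj) (hk.imp fun _ hj => mem_Jset.2 hj)

theorem sum_Jset_mul {n : ℕ} {k : Fin n → ℝ} (hk : ∀ j, 0 ≤ k j) (x : Fin n → ℝ) :
    ∑ j ∈ Jset k, k j * x j = ∑ j, k j * x j := by
  refine Finset.sum_subset (Finset.subset_univ _) fun j _ hj => ?_
  rw [le_antisymm (not_lt.1 (mt mem_Jset.2 hj)) (hk j), zero_mul]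

theorem coe_sum_ereal {ι : Type*} (s : Finset ι) (f : ι → ℝ) :
    ((∑ j ∈ s, f j : ℝ) : EReal) = ∑ j ∈ s, (f j : EReal) :=
  map_sum (⟨⟨Real.toEReal, EReal.coe_zero⟩, EReal.coe_add⟩ : ℝ →+ EReal) f s

section Residuation

theorem le_sSub_iff_add_le {x a b : EReal} (ha : a ≠ ⊤) : x ≤ sSub b a ↔ a + x ≤ b := by
  unfold sSub
  split_ifs with h
  · simp [h]
  · rw [EReal.le_sub_iff_add_le (.inl h) (.inl ha), add_comm]

variable {m n : ℕ} {A : Matrix (Fin m) (Fin n) EReal}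

theorem le_xstar_iff_maxPlus_le (hA : ∀ i j, A i j ≠ ⊤) {x : Fin n → EReal} {b : Fin m → EReal} :
    (∀ j, x j ≤ xstar A b j) ↔ ∀ i, maxPlus A x i ≤ b i := by
  simp only [xstar, maxPlus, le_iInf_iff, iSup_le_iff, le_sSub_iff_add_le (hA _ _)]
  exact forall_comm

theorem objF_ne_bot {i : Fin m} (hi : ∃ j, A i j ≠ ⊥) (x : Fin n → ℝ) : objF A x i ≠ ⊥ := by
  obtain ⟨j, hj⟩ := hi
  refine ne_bot_of_le_ne_bot ?_ (le_iSup (fun j => A i j + (x j : EReal)) j)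
  simp [EReal.add_eq_bot_iff, hj]

end Residuation

section LowerBound

variable {m n : ℕ} {A : Matrix (Fin m) (Fin n) EReal} {k : Fin n → ℝ} {i : Fin m} {c : ℝ}

/- Weight the inequalities `A i j ≤ t - x j` by `k j` and add them up. The bound `t` is real,
so no indeterminate sum occurs, whatever the entries of `A`. -/
theorem glb_le_of_objF_le (hk : ∀ j, 0 ≤ k j) (hk_pos : ∃ j, 0 < k j) {x : Fin n → ℝ} {t : ℝ}
    (h : objF A x i ≤ t) : glb A k (∑ j, k j * x j) i ≤ t := by
  have hK := sum_Jset_pos hk_pos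
  have entry_le (j : Fin n) : A i j ≤ ((t - x j : ℝ) : EReal) := by
    rw [EReal.coe_sub, EReal.le_sub_iff_add_le (.inl (EReal.coe_ne_bot _))
      (.inl (EReal.coe_ne_top _))]
    exact (le_iSup (fun j => A i j + (x j : EReal)) j).trans h
  rw [glb, EReal.div_le_iff_le_mul (EReal.coe_pos.2 hK) (EReal.coe_ne_top _)]
  calc ∑ j ∈ Jset k, (k j : EReal) * A i j + ((∑ j, k j * x j : ℝ) : EReal)
      ≤ ∑ j ∈ Jset k, (k j : EReal) * ((t - x j : ℝ) : EReal)
          + ((∑ j, k j * x j : ℝ) : EReal) := by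
        gcongr with j
        · exact EReal.coe_nonneg.2 (hk j)
        · exact entry_le j
    _ = ((∑ j ∈ Jset k, k j * (t - x j) + ∑ j ∈ Jset k, k j * x j : ℝ) : EReal) := by
        rw [sum_Jset_mul hk x, EReal.coe_add, coe_sum_ereal (Jset k)]
        simp only [EReal.coe_mul]
    _ = ((∑ j ∈ Jset k, k j : ℝ) : EReal) * t := by
        rw [← EReal.coe_mul, ← Finset.sum_add_distrib, Finset.sum_mul]
        simp only [← mul_add, sub_add_cancel]

theorem glb_le_objF (hk : ∀ j, 0 ≤ k j) (hk_pos : ∃ j, 0 < k j) (x : Fin n → ℝ) :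
    glb A k (∑ j, k j * x j) i ≤ objF A x i :=
  EReal.le_of_forall_lt_iff_le.1 fun _ ht => glb_le_of_objF_le hk hk_pos ht.le

theorem glb_eq_bot {j : Fin n} (hj : 0 < k j) (hAj : A i j = ⊥) : glb A k c i = ⊥ := by
  rw [glb, ← Finset.add_sum_erase _ _ (mem_Jset.2 hj), hAj, EReal.coe_mul_bot_of_pos hj,
    EReal.bot_add, EReal.bot_add]
  exact EReal.bot_div_of_pos_ne_top (EReal.coe_pos.2 (sum_Jset_pos ⟨j, hj⟩)) (EReal.coe_ne_top _)

theorem glb_eq_coe {a : Fin n → ℝ} (ha : ∀ j, 0 < k j → A i j = a j) (c : ℝ) :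
    glb A k c i = ((∑ j ∈ Jset k, k j * a j + c) / ∑ j ∈ Jset k, k j : ℝ) := by
  have sum_eq : ∑ j ∈ Jset k, (k j : EReal) * A i j
      = ((∑ j ∈ Jset k, k j * a j : ℝ) : EReal) := by
    rw [coe_sum_ereal]
    exact Finset.sum_congr rfl fun j hj => by rw [ha j (mem_Jset.1 hj), EReal.coe_mul]
  rw [glb, sum_eq, EReal.coe_div, EReal.coe_add]

theorem eq_coe_toReal_of_glb_ne_bot (hA : ∀ j, A i j ≠ ⊤) (hb : glb A k c i ≠ ⊥) (j : Fin n)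
    (hj : 0 < k j) : A i j = ((A i j).toReal : EReal) :=
  (EReal.coe_toReal (hA j) (mt (glb_eq_bot hj) hb)).symm

theorem sum_mul_le_of_objF_le_glb (hA : ∀ j, A i j ≠ ⊤) (hk : ∀ j, 0 ≤ k j)
    (hk_pos : ∃ j, 0 < k j) (hb : glb A k c i ≠ ⊥) {x : Fin n → ℝ}
    (hx : objF A x i ≤ glb A k c i) : ∑ j, k j * x j ≤ c := by
  have ha := eq_coe_toReal_of_glb_ne_bot hA hb
  have hle : glb A k (∑ j, k j * x j) i ≤ glb A k c i := (glb_le_objF hk hk_pos x).trans hx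
  rwa [glb_eq_coe ha, glb_eq_coe ha, EReal.coe_le_coe_iff,
    div_le_div_iff_of_pos_right (sum_Jset_pos hk_pos), add_le_add_iff_left] at hle

/- The witness `x j = glb A k c i - A i j` equalizes all the terms of the maximum. -/
theorem exists_objF_le_glb (hA : ∀ j, A i j ≠ ⊤) (hk : ∀ j, 0 ≤ k j)
    (hk_pos : ∃ j, 0 < k j) (hb : glb A k c i ≠ ⊥) :
    ∃ x : Fin n → ℝ, ∑ j, k j * x j = c ∧ objF A x i ≤ glb A k c i := by
  set a : Fin n → ℝ := fun j => (A i j).toReal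
  set K := ∑ j ∈ Jset k, k j
  set β := (∑ j ∈ Jset k, k j * a j + c) / K
  have hβ : glb A k c i = β := glb_eq_coe (eq_coe_toReal_of_glb_ne_bot hA hb) c
  refine ⟨fun j => β - a j, ?_, ?_⟩
  · have hKβ : K * β = ∑ j ∈ Jset k, k j * a j + c := mul_div_cancel₀ _ (sum_Jset_pos hk_pos).ne'
    rw [← sum_Jset_mul hk]
    simp only [mul_sub, Finset.sum_sub_distrib, ← Finset.sum_mul]
    linarith
  · rw [hβ]
    refine iSup_le fun j => ?_
    have entry_le : A i j ≤ (a j : EReal) := EReal.le_coe_toReal (hA j)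
    calc A i j + ((β - a j : ℝ) : EReal) ≤ a j + ((β - a j : ℝ) : EReal) := by gcongr
      _ = β := by rw [← EReal.coe_add, add_sub_cancel]

theorem IsOptimal.objF_le_glb {y : Fin n → ℝ} (hy : IsOptimal A k c y) (hA : ∀ j, A i j ≠ ⊤)
    (hk : ∀ j, 0 ≤ k j) (hk_pos : ∃ j, 0 < k j) (hb : glb A k c i ≠ ⊥) :
    objF A y i ≤ glb A k c i := by
  obtain ⟨x, hx, hxi⟩ := exists_objF_le_glb hA hk hk_pos hb
  exact (hy.2 x hx i).trans hxi

theorem isOptimal_of_objF_le_glb (hk : ∀ j, 0 ≤ k j) (hk_pos : ∃ j, 0 < k j) {x : Fin n → ℝ}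
    (hx : ∑ j, k j * x j = c) (h : ∀ i, objF A x i ≤ glb A k c i) : IsOptimal A k c x :=
  ⟨hx, fun z hz i => (h i).trans (hz ▸ glb_le_objF hk hk_pos z)⟩

end LowerBound

theorem stmt_16 {m n : ℕ} (hm : 1 ≤ m) (hn : 1 ≤ n)
    (A : Matrix (Fin m) (Fin n) EReal) (hA : ∀ i j, A i j ≠ ⊤)
    (k : Fin n → ℝ) (hk : ∀ j, 0 ≤ k j) (hk0 : ∃ j, k j ≠ 0) (c : ℝ)
    (hrow : ∀ i, ∃ j, A i j ≠ ⊥)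
    (hcol : ∀ j, (∀ i, A i j = ⊥) → 0 < k j)
    (hsolv : ∃ xt : Fin n → ℝ, IsOptimal A k c xt) :
    ∀ xt : Fin n → ℝ,
      (∀ j, k j = 0 → (xt j : EReal) ≤ xstar A (glb A k c) j) →
      (∀ j, 0 < k j → (xt j : EReal) = xstar A (glb A k c) j) →
        IsOptimal A k c xt := by
  intro xt hxt_zero hxt_pos
  obtain ⟨y, hy⟩ := hsolv
  have hk_pos : ∃ j, 0 < k j := hk0.imp fun j hj => (hk j).lt_of_ne' hj
  have hxt_le (j : Fin n) : (xt j : EReal) ≤ xstar A (glb A k c) j :=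
    (hk j).lt_or_eq.elim (fun hj => (hxt_pos j hj).le) fun hj => hxt_zero j hj.symm
  have hxt_sub : ∀ i, objF A xt i ≤ glb A k c i := (le_xstar_iff_maxPlus_le hA).1 hxt_le
  have hb (i : Fin m) : glb A k c i ≠ ⊥ :=
    ne_bot_of_le_ne_bot (objF_ne_bot (hrow i) xt) (hxt_sub i)
  have hy_le : ∀ j, (y j : EReal) ≤ xstar A (glb A k c) j :=
    (le_xstar_iff_maxPlus_le hA).2 fun i => hy.objF_le_glb (hA i) hk hk_pos (hb i)
  have hy_le_xt (j : Fin n) (hj : 0 < k j) : y j ≤ xt j :=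
    EReal.coe_le_coe_iff.1 ((hy_le j).trans_eq (hxt_pos j hj).symm)
  have hfeasible : ∑ j, k j * xt j = c := by
    apply le_antisymm
    · exact sum_mul_le_of_objF_le_glb (hA _) hk hk_pos (hb ⟨0, hm⟩) (hxt_sub _)
    · rw [← hy.1, ← sum_Jset_mul hk, ← sum_Jset_mul hk]
      exact Finset.sum_le_sum fun j hj =>
        mul_le_mul_of_nonneg_left (hy_le_xt j (mem_Jset.1 hj)) (hk j)
  exact isOptimal_of_objF_le_glb hk hk_pos hfeasible hxt_sub
end
end
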